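/- arXiv:2011.12894 — 2 statements merged into one kernel-verified Lean document; each statement's English description precedes it below -/
import Mathlib

section
/- Let ℓ be a prime and m ≥ 0, n ≥ 1 integers. In GSp₄(ℚ_ℓ) one has the double coset decomposition K^{(1)}_{m,n} · diag(ℓ², ℓ², 1, 1) · K^{(1)}_{m,n} = ⋃_{0≤x,y,z<ℓ²} A(x,y,z) · K^{(1)}_{m,n} ∪ ⋃ B(x,y,z,w) · K^{(1)}_{m,n} ∪ ⋃_{0≤x,y<ℓ²} C(x,y) · K^{(1)}_{m,n}, where A(x,y,z) has rows (ℓ²,0,x,y), (0,ℓ²,z,x), (0,0,1,0), (0,0,0,1); B(x,y,z,w) has rows (ℓ², ℓx, wx+ℓy, z), (0, ℓ, w, y), (0, 0, ℓ, −x), (0, 0, 0, 1) with the union over 0 ≤ x, y < ℓ, 1 ≤ w < ℓ, 0 ≤ z < ℓ²; and C(x,y) has rows (ℓ², x, 0, y), (0, 1, 0, 0), (0, 0, ℓ², −x), (0, 0, 0, 1); all the listed left cosets are pairwise distinct. -/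
open Pointwise

noncomputable section

/-- The standard skew-symmetric matrix `J` defining `GSp₄`. -/
def Jmat (p : ℕ) [Fact p.Prime] : Matrix (Fin 4) (Fin 4) ℚ_[p] :=
  !![0, 0, 0, 1; 0, 0, 1, 0; 0, -1, 0, 0; -1, 0, 0, 0]

/-- The subgroup `K^{(1)}_{m,n}` of `GSp₄(ℤ_ℓ)`: integral symplectic similitudes with
multiplier `μ ≡ 1 (mod ℓ^m)` and entries at positions (2,1), (3,1), (4,1), (4,2), (4,3)
divisible by `ℓⁿ`, viewed inside the 4×4 matrices over `ℚ_ℓ`. -/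
def Kmn1 (p : ℕ) [Fact p.Prime] (m n : ℕ) : Set (Matrix (Fin 4) (Fin 4) ℚ_[p]) :=
  {g | (∀ i j, ‖g i j‖ ≤ 1) ∧ ‖g.det‖ = 1 ∧
    (∃ μ : ℚ_[p], ‖μ‖ = 1 ∧ ‖μ - 1‖ ≤ (p : ℝ) ^ (-(m : ℤ)) ∧
      g.transpose * Jmat p * g = μ • Jmat p) ∧
    ‖g 1 0‖ ≤ (p : ℝ) ^ (-(n : ℤ)) ∧ ‖g 2 0‖ ≤ (p : ℝ) ^ (-(n : ℤ)) ∧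
    ‖g 3 0‖ ≤ (p : ℝ) ^ (-(n : ℤ)) ∧ ‖g 3 1‖ ≤ (p : ℝ) ^ (-(n : ℤ)) ∧
    ‖g 3 2‖ ≤ (p : ℝ) ^ (-(n : ℤ))}

/-- The coset representatives `A(x,y,z)` (for `0 ≤ x,y,z < ℓ²`), `B(x,y,z,w)` (for
`0 ≤ x,y < ℓ`, `0 ≤ z < ℓ²`, `1 ≤ w < ℓ`) and `C(x,y)` (for `0 ≤ x,y < ℓ²`). -/
def rep5 (p : ℕ) [Fact p.Prime] :
    (Fin (p ^ 2) × Fin (p ^ 2) × Fin (p ^ 2)) ⊕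
      (Fin p × Fin p × Fin (p ^ 2) × {w : ℕ // 1 ≤ w ∧ w < p}) ⊕
        (Fin (p ^ 2) × Fin (p ^ 2)) → Matrix (Fin 4) (Fin 4) ℚ_[p] :=
  Sum.elim
    (fun i => !![(p : ℚ_[p]) ^ 2, 0, ((i.1 : ℕ) : ℚ_[p]), ((i.2.1 : ℕ) : ℚ_[p]);
                 0, (p : ℚ_[p]) ^ 2, ((i.2.2 : ℕ) : ℚ_[p]), ((i.1 : ℕ) : ℚ_[p]);
                 0, 0, 1, 0;
                 0, 0, 0, 1])
    (Sum.elim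
      (fun i => !![(p : ℚ_[p]) ^ 2, (p : ℚ_[p]) * ((i.1 : ℕ) : ℚ_[p]),
                     ((i.2.2.2 : ℕ) : ℚ_[p]) * ((i.1 : ℕ) : ℚ_[p]) +
                       (p : ℚ_[p]) * ((i.2.1 : ℕ) : ℚ_[p]), ((i.2.2.1 : ℕ) : ℚ_[p]);
                   0, (p : ℚ_[p]), ((i.2.2.2 : ℕ) : ℚ_[p]), ((i.2.1 : ℕ) : ℚ_[p]);
                   0, 0, (p : ℚ_[p]), -((i.1 : ℕ) : ℚ_[p]);
                   0, 0, 0, 1])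
      (fun i => !![(p : ℚ_[p]) ^ 2, ((i.1 : ℕ) : ℚ_[p]), 0, ((i.2 : ℕ) : ℚ_[p]);
                   0, 1, 0, 0;
                   0, 0, (p : ℚ_[p]) ^ 2, -((i.1 : ℕ) : ℚ_[p]);
                   0, 0, 0, 1]))

/-! An element of `K` is the product of an element of the Heisenberg unipotent radical of the
Klingen parabolic and of an element `l` whose last column is `(0, 0, 0, *)`; this uses `1 ≤ n`,
which makes the lower right entry a unit. The symplectic relations then force the first row of `l`
to be `(*, 0, 0, 0)`. Moving `l` past `diag(p^N, p^N, 1, 1)` only involves its middle `2 × 2`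
block, hence the left cosets of `GL₂(ℤ_p)` in `GL₂(ℤ_p) diag(p^N, 1) GL₂(ℤ_p)`, which are
represented by the primitive matrices `β = !![p^a, w; 0, p^b]` with `a + b = N`. Finally
`levi β * unip x y z = unip (p^b x) (p^a y - w x) (p^N z) * levi β`, so over a fixed `β` the
unipotent coordinates only matter modulo `p^b`, `p^a` and `p^N`. For `N = 2` the three values of
`a` give the three families of cosets. -/

open Matrix

section Cosets

variable {M ι : Type*} [Monoid M] (K : Submonoid M) {t : M} {r : ι → M}

theorem mul_singleton_mul_eq_iUnion (hr : ∀ i, ∃ k ∈ K, ∃ k' ∈ K, k * t * k' = r i)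
    (ht : ∀ k ∈ K, ∃ i, ∃ k' ∈ K, k * t = r i * k') :
    (K * {t} * K : Set M) = ⋃ i, {r i} * (K : Set M) := by
  ext g
  simp only [Set.mem_mul, Set.mem_iUnion, Set.mem_singleton_iff, SetLike.mem_coe,
    exists_eq_left, exists_exists_and_eq_and]
  constructor
  · rintro ⟨k, hk, k', hk', rfl⟩
    obtain ⟨i, l, hl, h⟩ := ht k hk
    exact ⟨i, l * k', K.mul_mem hl hk', by rw [h, mul_assoc]⟩
  · rintro ⟨i, l, hl, rfl⟩
    obtain ⟨k, hk, k', hk', h⟩ := hr i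
    exact ⟨k, hk, k' * l, K.mul_mem hk' hl, by rw [← h, mul_assoc _ k' l]⟩

theorem injective_singleton_mul (h : ∀ i j, ∀ k ∈ K, r i * k = r j → i = j) :
    Function.Injective fun i ↦ {r i} * (K : Set M) := by
  intro i j hij
  have hj : r j ∈ {r i} * (K : Set M) :=
    (Set.ext_iff.1 hij _).2 ⟨r j, rfl, 1, K.one_mem, mul_one _⟩
  obtain ⟨_, rfl, k, hk, e⟩ := hj
  exact h i j k hk e

end Cosets

section Similitude

variable {R S : Type*} [CommRing R] [CommRing S]

/-- The skew-symmetric matrix `J` over an arbitrary commutative ring, needed to compare matrices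
over `ℤ_[p]` with matrices over `ℚ_[p]`. -/
def skewForm (R : Type*) [CommRing R] : Matrix (Fin 4) (Fin 4) R :=
  !![0, 0, 0, 1; 0, 0, 1, 0; 0, -1, 0, 0; -1, 0, 0, 0]

/-- `g` is a symplectic similitude with multiplier `μ`. The multiplier need not be a unit, so that
integral matrices such as `diag(p², p², 1, 1)` qualify over `ℤ_[p]`. -/
def IsSimilitude (g : Matrix (Fin 4) (Fin 4) R) (μ : R) : Prop :=
  gᵀ * skewForm R * g = μ • skewForm R

theorem transpose_mul_skewForm_mul_apply (g : Matrix (Fin 4) (Fin 4) R) (i j : Fin 4) :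
    (gᵀ * skewForm R * g) i j =
      g 0 i * g 3 j + g 1 i * g 2 j - g 2 i * g 1 j - g 3 i * g 0 j := by
  simp [skewForm, mul_apply, Fin.sum_univ_four]
  ring

theorem IsSimilitude.apply {g : Matrix (Fin 4) (Fin 4) R} {μ : R} (hg : IsSimilitude g μ)
    (i j : Fin 4) :
    g 0 i * g 3 j + g 1 i * g 2 j - g 2 i * g 1 j - g 3 i * g 0 j = μ * skewForm R i j := by
  rw [← transpose_mul_skewForm_mul_apply, hg, Matrix.smul_apply, smul_eq_mul]

theorem IsSimilitude.one : IsSimilitude (1 : Matrix (Fin 4) (Fin 4) R) 1 := by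
  simp [IsSimilitude]

theorem transpose_mul_skewForm_mul_mul (g h : Matrix (Fin 4) (Fin 4) R) :
    (g * h)ᵀ * skewForm R * (g * h) = hᵀ * (gᵀ * skewForm R * g) * h := by
  simp only [transpose_mul, Matrix.mul_assoc]

theorem IsSimilitude.mul {g h : Matrix (Fin 4) (Fin 4) R} {μ ν : R} (hg : IsSimilitude g μ)
    (hh : IsSimilitude h ν) : IsSimilitude (g * h) (μ * ν) := by
  rw [IsSimilitude, transpose_mul_skewForm_mul_mul, hg, Matrix.mul_smul, Matrix.smul_mul, hh,
    smul_smul]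

theorem IsSimilitude.of_mul_left [IsDomain R] {g h : Matrix (Fin 4) (Fin 4) R} {μ ν : R}
    (hμ : μ ≠ 0) (hg : IsSimilitude g μ) (hgh : IsSimilitude (g * h) (μ * ν)) :
    IsSimilitude h ν := by
  rw [IsSimilitude, transpose_mul_skewForm_mul_mul, hg, Matrix.mul_smul, Matrix.smul_mul,
    SemigroupAction.mul_smul] at hgh
  exact smul_right_injective _ hμ hgh

theorem IsSimilitude.isUnit_det {g : Matrix (Fin 4) (Fin 4) R} {μ : R} (hg : IsSimilitude g μ)
    (hμ : IsUnit μ) : IsUnit g.det := by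
  have hJ : (skewForm R).det = 1 := by
    simp [skewForm, det_succ_row_zero, Fin.sum_univ_succ, Fin.succAbove]
    ring
  have h : g.det * g.det = μ ^ 4 := by
    simpa [hJ] using congrArg det hg
  exact isUnit_of_mul_isUnit_left (h ▸ hμ.pow 4)

theorem isSimilitude_mapMatrix_iff {f : R →+* S} (hf : Function.Injective f)
    {g : Matrix (Fin 4) (Fin 4) R} {μ : R} :
    IsSimilitude (f.mapMatrix g) (f μ) ↔ IsSimilitude g μ := by
  have hJ : skewForm S = f.mapMatrix (skewForm R) := by
    ext i j
    fin_cases i <;> fin_cases j <;> simp [skewForm]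
  have hsmul : f μ • f.mapMatrix (skewForm R) = f.mapMatrix (μ • skewForm R) := by
    ext i j
    simp
  have htranspose : (f.mapMatrix g)ᵀ = f.mapMatrix gᵀ := rfl
  rw [IsSimilitude, hJ, hsmul, htranspose, ← map_mul, ← map_mul]
  exact (map_injective hf).eq_iff

end Similitude

section KlingenSubgroup

variable {R : Type*} [CommRing R]

/-- `g` lies modulo `b` in the Klingen parabolic, whose diagonal blocks have sizes 1, 2, 1. -/
def IsKlingenMod (b : R) (g : Matrix (Fin 4) (Fin 4) R) : Prop :=
  BlockTriangular ((Ideal.Quotient.mk (Ideal.span {b})).mapMatrix g) ![0, 1, 1, 2]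

theorem isKlingenMod_iff {b : R} {g : Matrix (Fin 4) (Fin 4) R} :
    IsKlingenMod b g ↔ b ∣ g 1 0 ∧ b ∣ g 2 0 ∧ b ∣ g 3 0 ∧ b ∣ g 3 1 ∧ b ∣ g 3 2 := by
  simp [IsKlingenMod, BlockTriangular, Fin.forall_fin_succ, Ideal.Quotient.eq_zero_iff_dvd]

/-- The analogue of `K^{(1)}_{m,n}` over a commutative ring: multiplier a unit congruent to `1`
modulo `a`, and Klingen shape modulo `b`. It is only recorded as a submonoid, since the
decomposition into left cosets never uses inverses. -/
def klingenSubmonoid (a b : R) : Submonoid (Matrix (Fin 4) (Fin 4) R) where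
  carrier := {g | (∃ μ, IsUnit μ ∧ a ∣ μ - 1 ∧ IsSimilitude g μ) ∧ IsKlingenMod b g}
  one_mem' := by
    refine ⟨⟨1, isUnit_one, by simp, .one⟩, ?_⟩
    rw [IsKlingenMod, map_one]
    exact blockTriangular_one
  mul_mem' := by
    rintro g h ⟨⟨μ, hμ, hμa, hgμ⟩, hg⟩ ⟨⟨ν, hν, hνa, hhν⟩, hh⟩
    refine ⟨⟨μ * ν, hμ.mul hν, ?_, hgμ.mul hhν⟩, ?_⟩
    · rw [show μ * ν - 1 = (μ - 1) * ν + (ν - 1) by ring]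
      exact dvd_add (hμa.mul_right ν) hνa
    · rw [IsKlingenMod, map_mul]
      exact BlockTriangular.mul hg hh

/-- The element of the unipotent radical of the Klingen parabolic with first row `(1, x, y, z)`. -/
def unip (x y z : R) : Matrix (Fin 4) (Fin 4) R :=
  !![1, x, y, z; 0, 1, 0, y; 0, 0, 1, -x; 0, 0, 0, 1]

/-- The embedding of `2 × 2` matrices into the Levi factor of the Klingen parabolic as the middle
block, normalised to have lower right entry `1` and multiplier `det β`. -/
def levi (β : Matrix (Fin 2) (Fin 2) R) : Matrix (Fin 4) (Fin 4) R :=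
  !![β.det, 0, 0, 0; 0, β 0 0, β 0 1, 0; 0, β 1 0, β 1 1, 0; 0, 0, 0, 1]

theorem unip_mul_unip (x y z x' y' z' : R) :
    unip x y z * unip x' y' z' = unip (x + x') (y + y') (z + z' + x * y' - y * x') := by
  ext i j
  fin_cases i <;> fin_cases j <;> simp [unip, mul_apply, Fin.sum_univ_four] <;> ring

theorem unip_zero : unip (0 : R) 0 0 = 1 := by
  ext i j
  fin_cases i <;> fin_cases j <;> simp [unip]

theorem levi_mul_levi (β δ : Matrix (Fin 2) (Fin 2) R) :
    levi β * levi δ = levi (β * δ) := by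
  ext i j
  fin_cases i <;> fin_cases j <;> simp [levi, mul_apply, Fin.sum_univ_four, Fin.sum_univ_two]

theorem levi_mul_unip (β : Matrix (Fin 2) (Fin 2) R) (x y z : R) :
    levi β * unip x y z =
      unip (β 1 1 * x - β 1 0 * y) (β 0 0 * y - β 0 1 * x) (β.det * z) * levi β := by
  ext i j
  fin_cases i <;> fin_cases j <;>
    simp [levi, unip, mul_apply, Fin.sum_univ_four, det_fin_two] <;> ring

theorem isSimilitude_unip (x y z : R) : IsSimilitude (unip x y z) 1 := by
  ext i j
  rw [transpose_mul_skewForm_mul_apply]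
  fin_cases i <;> fin_cases j <;> simp [unip, skewForm]
  ring

theorem isSimilitude_levi (β : Matrix (Fin 2) (Fin 2) R) : IsSimilitude (levi β) β.det := by
  ext i j
  rw [transpose_mul_skewForm_mul_apply]
  fin_cases i <;> fin_cases j <;> simp [levi, skewForm, det_fin_two] <;> ring

theorem unip_mem_klingenSubmonoid (a b x y z : R) : unip x y z ∈ klingenSubmonoid a b :=
  ⟨⟨1, isUnit_one, by simp, isSimilitude_unip x y z⟩, isKlingenMod_iff.2 (by simp [unip])⟩

theorem levi_mem_klingenSubmonoid (a b : R) {β : Matrix (Fin 2) (Fin 2) R} (hβ : β.det = 1) :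
    levi β ∈ klingenSubmonoid a b :=
  ⟨⟨1, isUnit_one, by simp, hβ ▸ isSimilitude_levi β⟩, isKlingenMod_iff.2 (by simp [levi])⟩

theorem isUnit_apply_three_three [IsLocalRing R] {a b : R} (hb : b ∈ nonunits R)
    {k : Matrix (Fin 4) (Fin 4) R} (hk : k ∈ klingenSubmonoid a b) : IsUnit (k 3 3) := by
  obtain ⟨⟨μ, hμ, -, hkμ⟩, hkb⟩ := hk
  obtain ⟨⟨c₁, h₁⟩, ⟨c₂, h₂⟩, ⟨c₃, h₃⟩, -⟩ := isKlingenMod_iff.1 hkb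
  have h : k 0 0 * k 3 3 + b * (c₁ * k 2 3 - c₂ * k 1 3 - c₃ * k 0 3) = μ := by
    have h03 : k 0 0 * k 3 3 + k 1 0 * k 2 3 - k 2 0 * k 1 3 - k 3 0 * k 0 3 = μ := by
      simpa [skewForm] using hkμ.apply 0 3
    rw [h₁, h₂, h₃] at h03
    linear_combination h03
  rcases IsLocalRing.isUnit_or_isUnit_of_isUnit_add (h ▸ hμ) with h | h
  · exact isUnit_of_mul_isUnit_right h
  · exact absurd (isUnit_of_mul_isUnit_left h) hb

theorem exists_eq_unip_mul [IsLocalRing R] {a b : R} (hb : b ∈ nonunits R)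
    {k : Matrix (Fin 4) (Fin 4) R} (hk : k ∈ klingenSubmonoid a b) :
    ∃ x y z, ∃ l ∈ klingenSubmonoid a b,
      k = unip x y z * l ∧ l 0 3 = 0 ∧ l 1 3 = 0 ∧ l 2 3 = 0 := by
  have hd := isUnit_apply_three_three hb hk
  obtain ⟨x, hx⟩ := hd.dvd (a := -k 2 3)
  obtain ⟨y, hy⟩ := hd.dvd (a := k 1 3)
  obtain ⟨z, hz⟩ := hd.dvd (a := k 0 3)
  refine ⟨x, y, z, unip (-x) (-y) (-z) * k,
    mul_mem (unip_mem_klingenSubmonoid a b _ _ _) hk, ?_, ?_, ?_, ?_⟩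
  · have hunip : unip x y z * unip (-x) (-y) (-z) = 1 := by
      rw [unip_mul_unip, ← unip_zero]
      congr 1 <;> ring
    rw [← mul_assoc, hunip, one_mul]
  · calc (unip (-x) (-y) (-z) * k) 0 3 = k 0 3 - x * k 1 3 - y * k 2 3 - z * k 3 3 := by
          simp [unip, mul_apply, Fin.sum_univ_four]
          ring
      _ = 0 := by linear_combination hz - x * hy + y * hx
  · calc (unip (-x) (-y) (-z) * k) 1 3 = k 1 3 - y * k 3 3 := by
          simp [unip, mul_apply, Fin.sum_univ_four]
          ring
      _ = 0 := by linear_combination hy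
  · calc (unip (-x) (-y) (-z) * k) 2 3 = k 2 3 + x * k 3 3 := by
          simp [unip, mul_apply, Fin.sum_univ_four]
      _ = 0 := by linear_combination -hx

theorem IsSimilitude.first_row_eq_zero {l : Matrix (Fin 4) (Fin 4) R} {μ : R}
    (hl : IsSimilitude l μ) (h03 : l 0 3 = 0) (h13 : l 1 3 = 0) (h23 : l 2 3 = 0)
    (h33 : IsUnit (l 3 3)) : l 0 1 = 0 ∧ l 0 2 = 0 := by
  exact ⟨by simpa [skewForm, h03, h13, h23, h33.mul_left_eq_zero] using hl.apply 1 3,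
    by simpa [skewForm, h03, h13, h23, h33.mul_left_eq_zero] using hl.apply 2 3⟩

theorem IsSimilitude.det_middle {l : Matrix (Fin 4) (Fin 4) R} {μ : R}
    (hl : IsSimilitude l μ) (h01 : l 0 1 = 0) (h02 : l 0 2 = 0) :
    !![l 1 1, l 1 2; l 2 1, l 2 2].det = μ := by
  simpa [skewForm, h01, h02, det_fin_two, mul_comm (l 2 1)] using hl.apply 1 2

theorem exists_mul_levi_eq [IsDomain R] {a b : R} {l : Matrix (Fin 4) (Fin 4) R}
    (hl : l ∈ klingenSubmonoid a b) (h01 : l 0 1 = 0) (h02 : l 0 2 = 0) (h03 : l 0 3 = 0)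
    (h13 : l 1 3 = 0) (h23 : l 2 3 = 0) {β δ : Matrix (Fin 2) (Fin 2) R} (hβ : β.det ≠ 0)
    (hδ : !![l 1 1, l 1 2; l 2 1, l 2 2] * !![β.det, 0; 0, 1] = β * δ) :
    ∃ g ∈ klingenSubmonoid a b, l * levi !![β.det, 0; 0, 1] = levi β * g := by
  obtain ⟨⟨μ, hμ, hμa, hlμ⟩, hlb⟩ := hl
  obtain ⟨h10, h20, h30, h31, h32⟩ := isKlingenMod_iff.1 hlb
  have hδ00 : l 1 1 * β.det = β 0 0 * δ 0 0 + β 0 1 * δ 1 0 := by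
    simpa [mul_apply] using congrFun₂ hδ 0 0
  have hδ01 : l 1 2 = β 0 0 * δ 0 1 + β 0 1 * δ 1 1 := by
    simpa [mul_apply] using congrFun₂ hδ 0 1
  have hδ10 : l 2 1 * β.det = β 1 0 * δ 0 0 + β 1 1 * δ 1 0 := by
    simpa [mul_apply] using congrFun₂ hδ 1 0
  have hδ11 : l 2 2 = β 1 0 * δ 0 1 + β 1 1 * δ 1 1 := by
    simpa [mul_apply] using congrFun₂ hδ 1 1
  set g : Matrix (Fin 4) (Fin 4) R :=
    !![l 0 0, 0, 0, 0;
       β 1 1 * l 1 0 - β 0 1 * l 2 0, δ 0 0, δ 0 1, 0;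
       β 0 0 * l 2 0 - β 1 0 * l 1 0, δ 1 0, δ 1 1, 0;
       β.det * l 3 0, β.det * l 3 1, l 3 2, l 3 3] with hg
  have h : l * levi !![β.det, 0; 0, 1] = levi β * g := by
    ext i j
    fin_cases i <;> fin_cases j <;>
      simp [levi, hg, mul_apply, Fin.sum_univ_four, h01, h02, h03, h13, h23, hδ00, hδ01, hδ10, hδ11]
        <;> simp [det_fin_two] <;> ring
  refine ⟨g, ⟨⟨μ, hμ, hμa, .of_mul_left hβ (isSimilitude_levi β) ?_⟩, isKlingenMod_iff.2 ?_⟩, h⟩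
  · rw [← h, mul_comm β.det]
    simpa using hlμ.mul (isSimilitude_levi !![β.det, 0; 0, 1])
  · exact ⟨dvd_sub (h10.mul_left _) (h20.mul_left _), dvd_sub (h20.mul_left _) (h10.mul_left _),
      h30.mul_left _, h31.mul_left _, h32⟩

end KlingenSubgroup

section HeckeIndex

variable {p : ℕ}

/-- The middle block of a coset representative. With `w < p ^ a` and `p ∤ w` unless `a = 0` or
`b = 0`, these matrices represent the left cosets in the double coset of `diag(p^(a+b), 1)` for
`GL₂`. -/
def heckeBlock (R : Type*) [CommRing R] (p a b w : ℕ) : Matrix (Fin 2) (Fin 2) R :=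
  !![(p : R) ^ a, (w : R); 0, (p : R) ^ b]

theorem det_heckeBlock (R : Type*) [CommRing R] (p a b w : ℕ) :
    (heckeBlock R p a b w).det = (p : R) ^ (a + b) := by
  simp [heckeBlock, pow_add]

/-- The parameters of a left coset in the double coset of `diag(p^N, p^N, 1, 1)`: `a, b, w`
determine its middle block and `x, y, z` its unipotent part. -/
@[ext]
structure HeckeIndex (p N : ℕ) where
  (a b x y z w : ℕ)
  add_eq : a + b = N
  x_lt : x < p ^ b
  y_lt : y < p ^ a
  z_lt : z < p ^ N
  w_lt : w < p ^ a
  primitive : p ∣ w → a = 0 ∨ b = 0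

/-- The coset representative attached to an index, over an arbitrary ring so that the integral
representatives can be compared with their images over `ℚ_[p]`. -/
def HeckeIndex.rep (R : Type*) [CommRing R] {N : ℕ} (i : HeckeIndex p N) :
    Matrix (Fin 4) (Fin 4) R :=
  unip (i.x : R) i.y i.z * levi (heckeBlock R p i.a i.b i.w)

theorem HeckeIndex.rep_eq (R : Type*) [CommRing R] {N : ℕ} (i : HeckeIndex p N) :
    i.rep R =
      !![(p : R) ^ N, i.x * (p : R) ^ i.a, i.x * i.w + i.y * (p : R) ^ i.b, (i.z : R);
         0, (p : R) ^ i.a, (i.w : R), (i.y : R);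
         0, 0, (p : R) ^ i.b, -(i.x : R);
         0, 0, 0, 1] := by
  have hdet := det_heckeBlock R p i.a i.b i.w
  rw [i.add_eq] at hdet
  rw [rep, levi, hdet]
  ext r s
  fin_cases r <;> fin_cases s <;> simp [unip, heckeBlock, mul_apply, Fin.sum_univ_four]

theorem HeckeIndex.mapMatrix_rep {R S : Type*} [CommRing R] [CommRing S] (f : R →+* S) {N : ℕ}
    (i : HeckeIndex p N) : f.mapMatrix (i.rep R) = i.rep S := by
  rw [rep_eq, rep_eq]
  ext r s
  fin_cases r <;> fin_cases s <;> simp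

variable [Fact p.Prime]

theorem exists_nat_add_pow_mul (k : ℕ) (u : ℤ_[p]) :
    ∃ x < p ^ k, ∃ e, u = (x : ℤ_[p]) + (p : ℤ_[p]) ^ k * e := by
  obtain ⟨e, he⟩ := Ideal.mem_span_singleton.1 (PadicInt.appr_spec k u)
  exact ⟨u.appr k, u.appr_lt k, e, sub_eq_iff_eq_add'.1 he⟩

theorem eq_and_eq_zero_of_pow_mul_add_eq {k x y : ℕ} {e : ℤ_[p]} (hx : x < p ^ k) (hy : y < p ^ k)
    (h : (p : ℤ_[p]) ^ k * e + x = y) : x = y ∧ e = 0 := by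
  have hdvd : (p : ℤ) ^ k ∣ (y : ℤ) - x := by
    rw [← PadicInt.pow_p_dvd_int_iff]
    exact ⟨e, by simp [← h]⟩
  obtain rfl : x = y := by
    refine Nat.ModEq.eq_of_lt_of_lt (Nat.modEq_iff_dvd.2 ?_) hx hy
    simpa using hdvd
  simpa [PadicInt.prime_p.ne_zero] using h

theorem exists_eq_pow_mul (N : ℕ) (u : ℤ_[p]) :
    ∃ a b, a + b = N ∧ ∃ v, u = (p : ℤ_[p]) ^ b * v ∧ (a = 0 ∨ IsUnit v) := by
  induction N with
  | zero => exact ⟨0, 0, rfl, u, by simp, .inl rfl⟩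
  | succ N ih =>
    obtain ⟨a, b, rfl, v, rfl, hv⟩ := ih
    by_cases hu : IsUnit v
    · exact ⟨a + 1, b, by ring, v, rfl, .inr hu⟩
    · obtain ⟨c, rfl⟩ : (p : ℤ_[p]) ∣ v := by
        rwa [← PadicInt.norm_lt_one_iff_dvd, ← PadicInt.mem_nonunits]
      obtain rfl : a = 0 := hv.resolve_right hu
      exact ⟨0, b + 1, by ring, c, by ring, .inl rfl⟩

-- The second column of `γ` determines the left coset: `b` is the valuation of `γ 1 1`, cut off
-- at `N`, and `w` is then read off from `γ 0 1`.
theorem exists_mul_diag_eq_heckeBlock_mul {γ : Matrix (Fin 2) (Fin 2) ℤ_[p]} (hγ : IsUnit γ.det)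
    (N : ℕ) :
    ∃ a b w, a + b = N ∧ w < p ^ a ∧ (p ∣ w → a = 0 ∨ b = 0) ∧
      ∃ δ, γ * !![(p : ℤ_[p]) ^ N, 0; 0, 1] = heckeBlock ℤ_[p] p a b w * δ := by
  obtain ⟨a, b, rfl, v, hv, hav⟩ := exists_eq_pow_mul N (γ 1 1)
  obtain ⟨w, hw, e, he⟩ : ∃ w < p ^ a, ∃ e, γ 0 1 = (w : ℤ_[p]) * v + (p : ℤ_[p]) ^ a * e := by
    rcases hav with rfl | ⟨v, rfl⟩
    · exact ⟨0, by simp, γ 0 1, by simp⟩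
    · obtain ⟨w, hw, e, he⟩ := exists_nat_add_pow_mul a (γ 0 1 * ((v⁻¹ : ℤ_[p]ˣ) : ℤ_[p]))
      refine ⟨w, hw, e * v, ?_⟩
      linear_combination (v : ℤ_[p]) * he - γ 0 1 * v.inv_mul
  refine ⟨a, b, w, rfl, hw, fun hpw ↦ ?_,
    !![(p : ℤ_[p]) ^ b * γ 0 0 - w * γ 1 0, e; (p : ℤ_[p]) ^ a * γ 1 0, v], ?_⟩
  · by_contra! ⟨ha, hb⟩
    have hpw : (p : ℤ_[p]) ∣ w := Nat.cast_dvd_cast hpw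
    have hp01 : (p : ℤ_[p]) ∣ γ 0 1 :=
      he ▸ dvd_add (hpw.mul_right v) ((dvd_pow_self _ ha).mul_right e)
    have hp11 : (p : ℤ_[p]) ∣ γ 1 1 := hv ▸ (dvd_pow_self _ hb).mul_right v
    refine PadicInt.prime_p.not_isUnit (isUnit_of_dvd_unit ?_ hγ)
    rw [det_fin_two]
    exact dvd_sub (hp11.mul_left _) (hp01.mul_right _)
  · ext r s
    fin_cases r <;> fin_cases s <;> simp [heckeBlock, mul_apply, he, hv, pow_add] <;> ring

theorem exists_mul_diag_mul_eq_heckeBlock {a b w : ℕ} (hw : w < p ^ a)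
    (hprim : p ∣ w → a = 0 ∨ b = 0) :
    ∃ γ δ : Matrix (Fin 2) (Fin 2) ℤ_[p], γ.det = 1 ∧ δ.det = 1 ∧
      γ * !![(p : ℤ_[p]) ^ (a + b), 0; 0, 1] * δ = heckeBlock ℤ_[p] p a b w := by
  rcases eq_or_ne b 0 with rfl | hb
  · exact ⟨!![1, w; 0, 1], 1, by simp, by simp, by simp [heckeBlock]⟩
  rcases eq_or_ne a 0 with rfl | ha
  · obtain rfl : w = 0 := by simpa using hw
    exact ⟨!![0, 1; -1, 0], !![0, -1; 1, 0], by simp, by simp, by simp [heckeBlock]⟩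
  have hunit : IsUnit (w : ℤ_[p]) := by
    have hpw : ¬p ∣ w := fun h ↦ (hprim h).elim ha hb
    rwa [PadicInt.isUnit_iff, PadicInt.norm_natCast_eq_one_iff,
      (Fact.out : p.Prime).coprime_iff_not_dvd]
  obtain ⟨v, hv⟩ := hunit.exists_right_inv
  refine ⟨!![0, w; -v, (p : ℤ_[p]) ^ b], !![1, 0; v * (p : ℤ_[p]) ^ a, 1], ?_, by simp, ?_⟩
  · simpa using hv
  · ext r s
    fin_cases r <;> fin_cases s <;> simp [heckeBlock, mul_apply, pow_add]
    · linear_combination (p : ℤ_[p]) ^ a * hv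
    · ring

theorem exists_unip_mul_levi_eq {a b w : ℕ} (x y z : ℤ_[p]) :
    ∃ x₀ < p ^ b, ∃ y₀ < p ^ a, ∃ z₀ < p ^ (a + b), ∃ x' y' z' : ℤ_[p],
      unip x y z * levi (heckeBlock ℤ_[p] p a b w) =
        unip (x₀ : ℤ_[p]) y₀ z₀ * levi (heckeBlock ℤ_[p] p a b w) * unip x' y' z' := by
  obtain ⟨x₀, hx₀, x', hx⟩ := exists_nat_add_pow_mul b x
  obtain ⟨y₀, hy₀, y', hy⟩ := exists_nat_add_pow_mul a (y + (w : ℤ_[p]) * x')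
  obtain ⟨z₀, hz₀, z', hz⟩ := exists_nat_add_pow_mul (a + b)
    (z - (x₀ : ℤ_[p]) * ((p : ℤ_[p]) ^ a * y' - (w : ℤ_[p]) * x') +
      (y₀ : ℤ_[p]) * ((p : ℤ_[p]) ^ b * x'))
  refine ⟨x₀, hx₀, y₀, hy₀, z₀, hz₀, x', y', z', ?_⟩
  rw [mul_assoc, levi_mul_unip, ← mul_assoc, unip_mul_unip]
  congr 2
  · simpa [heckeBlock] using hx
  · change y = (y₀ : ℤ_[p]) + ((p : ℤ_[p]) ^ a * y' - w * x')
    linear_combination hy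
  · change z = z₀ + _ * z' + x₀ * ((p : ℤ_[p]) ^ a * y' - w * x') -
      y₀ * ((p : ℤ_[p]) ^ b * x' - 0 * y')
    rw [det_heckeBlock]
    linear_combination hz

namespace HeckeIndex

variable {N : ℕ}

theorem exists_mul_mul_eq_rep (c d : ℤ_[p]) (i : HeckeIndex p N) :
    ∃ k ∈ klingenSubmonoid c d, ∃ k' ∈ klingenSubmonoid c d,
      k * levi !![(p : ℤ_[p]) ^ N, 0; 0, 1] * k' = i.rep ℤ_[p] := by
  obtain ⟨γ, δ, hγ, hδ, h⟩ := exists_mul_diag_mul_eq_heckeBlock i.w_lt i.primitive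
  rw [i.add_eq] at h
  refine ⟨unip (i.x : ℤ_[p]) i.y i.z * levi γ,
    mul_mem (unip_mem_klingenSubmonoid c d _ _ _) (levi_mem_klingenSubmonoid c d hγ),
    levi δ, levi_mem_klingenSubmonoid c d hδ, ?_⟩
  rw [rep, ← h, ← levi_mul_levi, ← levi_mul_levi]
  simp only [mul_assoc]

theorem exists_mul_eq_rep_mul {c d : ℤ_[p]} (hd : d ∈ nonunits ℤ_[p]) (N : ℕ)
    {k : Matrix (Fin 4) (Fin 4) ℤ_[p]} (hk : k ∈ klingenSubmonoid c d) :
    ∃ i : HeckeIndex p N, ∃ g ∈ klingenSubmonoid c d,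
      k * levi !![(p : ℤ_[p]) ^ N, 0; 0, 1] = i.rep ℤ_[p] * g := by
  obtain ⟨x, y, z, l, hl, rfl, h03, h13, h23⟩ := exists_eq_unip_mul hd hk
  obtain ⟨⟨μ, hμ, -, hlμ⟩, -⟩ := id hl
  obtain ⟨h01, h02⟩ := hlμ.first_row_eq_zero h03 h13 h23 (isUnit_apply_three_three hd hl)
  obtain ⟨a, b, w, rfl, hw, hprim, δ, hδ⟩ :=
    exists_mul_diag_eq_heckeBlock_mul (hlμ.det_middle h01 h02 ▸ hμ) N
  have hdet := det_heckeBlock ℤ_[p] p a b w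
  have hdet0 : (heckeBlock ℤ_[p] p a b w).det ≠ 0 :=
    hdet ▸ pow_ne_zero _ PadicInt.prime_p.ne_zero
  obtain ⟨g, hg, hlg⟩ := exists_mul_levi_eq hl h01 h02 h03 h13 h23 hdet0 (hdet.symm ▸ hδ)
  obtain ⟨x₀, hx, y₀, hy, z₀, hz, x', y', z', hu⟩ := exists_unip_mul_levi_eq (w := w) x y z
  refine ⟨⟨a, b, x₀, y₀, z₀, w, rfl, hx, hy, hz, hw, hprim⟩, unip x' y' z' * g,
    mul_mem (unip_mem_klingenSubmonoid c d _ _ _) hg, ?_⟩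
  rw [mul_assoc, ← hdet, hlg, ← mul_assoc, hu, mul_assoc, rep]

theorem eq_of_rep_mul_eq {i j : HeckeIndex p N} {k : Matrix (Fin 4) (Fin 4) ℤ_[p]}
    (h : i.rep ℤ_[p] * k = j.rep ℤ_[p]) : i = j := by
  rw [rep_eq, rep_eq] at h
  have entry (r s : Fin 4) := congrFun₂ h r s
  simp only [mul_apply, Fin.sum_univ_four] at entry
  have hp0 : (p : ℤ_[p]) ≠ 0 := PadicInt.prime_p.ne_zero
  have hp_unit : ¬IsUnit (p : ℤ_[p]) := PadicInt.prime_p.not_isUnit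
  have h31 : k 3 1 = 0 := by simpa using entry 3 1
  have h32 : k 3 2 = 0 := by simpa using entry 3 2
  have h33 : k 3 3 = 1 := by simpa using entry 3 3
  have h21 : k 2 1 = 0 := by simpa [h31, hp0] using entry 2 1
  have h22 : (p : ℤ_[p]) ^ i.b * k 2 2 = (p : ℤ_[p]) ^ j.b := by simpa [h32] using entry 2 2
  have h11 : (p : ℤ_[p]) ^ i.a * k 1 1 = (p : ℤ_[p]) ^ j.a := by simpa [h31, h21] using entry 1 1
  have hab : i.a = j.a ∧ i.b = j.b := by
    have ha : i.a ≤ j.a := (pow_dvd_pow_iff hp0 hp_unit).1 ⟨_, h11.symm⟩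
    have hb : i.b ≤ j.b := (pow_dvd_pow_iff hp0 hp_unit).1 ⟨_, h22.symm⟩
    have := i.add_eq
    have := j.add_eq
    lia
  obtain ⟨ha, hb⟩ := hab
  have h22 : k 2 2 = 1 := mul_left_cancel₀ (pow_ne_zero i.b hp0) (by rw [h22, hb, mul_one])
  obtain ⟨hw, -⟩ : i.w = j.w ∧ k 1 2 = 0 :=
    eq_and_eq_zero_of_pow_mul_add_eq i.w_lt (ha ▸ j.w_lt) (by simpa [h32, h22] using entry 1 2)
  have hx : (p : ℤ_[p]) ^ i.b * k 2 3 - i.x = -j.x := by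
    simpa [h33, sub_eq_add_neg] using entry 2 3
  obtain ⟨hx, h23⟩ : j.x = i.x ∧ k 2 3 = 0 :=
    eq_and_eq_zero_of_pow_mul_add_eq (hb ▸ j.x_lt) i.x_lt (by linear_combination hx)
  obtain ⟨hy, h13⟩ : i.y = j.y ∧ k 1 3 = 0 :=
    eq_and_eq_zero_of_pow_mul_add_eq i.y_lt (ha ▸ j.y_lt) (by simpa [h33, h23] using entry 1 3)
  obtain ⟨hz, -⟩ : i.z = j.z ∧ k 0 3 = 0 :=
    eq_and_eq_zero_of_pow_mul_add_eq i.z_lt j.z_lt (by simpa [h33, h23, h13] using entry 0 3)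
  exact HeckeIndex.ext ha hb hx.symm hy hz hw

end HeckeIndex

end HeckeIndex

section DoubleCosets

theorem Kmn1_eq_map (p : ℕ) [Fact p.Prime] (m n : ℕ) :
    Kmn1 p m n =
      (klingenSubmonoid ((p : ℤ_[p]) ^ m) ((p : ℤ_[p]) ^ n)).map
        (PadicInt.Coe.ringHom (p := p)).mapMatrix := by
  have hdvd (e : ℕ) (u : ℤ_[p]) : ‖(u : ℚ_[p])‖ ≤ (p : ℝ) ^ (-(e : ℤ)) ↔ (p : ℤ_[p]) ^ e ∣ u := by
    rw [← PadicInt.norm_def, PadicInt.norm_le_pow_iff_mem_span_pow, Ideal.mem_span_singleton]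
  have hsim (g : Matrix (Fin 4) (Fin 4) ℤ_[p]) (μ : ℤ_[p]) :
      IsSimilitude (PadicInt.Coe.ringHom.mapMatrix g) (μ : ℚ_[p]) ↔ IsSimilitude g μ :=
    isSimilitude_mapMatrix_iff Subtype.val_injective
  ext g
  constructor
  · rintro ⟨hint, -, ⟨μ, hμ, hμm, hgμ⟩, hgn⟩
    obtain ⟨g, rfl⟩ : ∃ h : Matrix (Fin 4) (Fin 4) ℤ_[p], PadicInt.Coe.ringHom.mapMatrix h = g :=
      ⟨.of fun i j ↦ ⟨g i j, hint i j⟩, rfl⟩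
    obtain ⟨μ, rfl⟩ : ∃ ν : ℤ_[p], (ν : ℚ_[p]) = μ := ⟨⟨μ, hμ.le⟩, rfl⟩
    refine ⟨g, ⟨⟨μ, PadicInt.isUnit_iff.2 hμ, ?_, (hsim g μ).1 hgμ⟩, isKlingenMod_iff.2 ?_⟩, rfl⟩
    · simpa [← hdvd] using hμm
    · simp only [← hdvd]
      exact hgn
  · rintro ⟨g, ⟨⟨μ, hμ, hμm, hgμ⟩, hgn⟩, rfl⟩
    have hdet : ‖(PadicInt.Coe.ringHom.mapMatrix g).det‖ = 1 := by
      rw [← RingHom.map_det]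
      exact PadicInt.isUnit_iff.1 (hgμ.isUnit_det hμ)
    refine ⟨fun i j ↦ (g i j).2, hdet, ⟨μ, PadicInt.isUnit_iff.1 hμ, ?_, (hsim g μ).2 hgμ⟩, ?_⟩
    · simpa [← hdvd] using hμm
    · simp only [isKlingenMod_iff, ← hdvd] at hgn
      exact hgn

theorem mapMatrix_levi_diag (p : ℕ) [Fact p.Prime] (N : ℕ) :
    (PadicInt.Coe.ringHom (p := p)).mapMatrix (levi !![(p : ℤ_[p]) ^ N, 0; 0, 1]) =
      diagonal ![(p : ℚ_[p]) ^ N, (p : ℚ_[p]) ^ N, 1, 1] := by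
  ext i j
  fin_cases i <;> fin_cases j <;> simp [levi]

theorem stmt5_general (p : ℕ) [Fact p.Prime] (m n N : ℕ) (hn : 1 ≤ n) :
    (Kmn1 p m n * {diagonal ![(p : ℚ_[p]) ^ N, (p : ℚ_[p]) ^ N, 1, 1]} * Kmn1 p m n =
      ⋃ i : HeckeIndex p N, {i.rep ℚ_[p]} * Kmn1 p m n) ∧
    Function.Injective fun i : HeckeIndex p N ↦ {i.rep ℚ_[p]} * Kmn1 p m n := by
  have hpn : (p : ℤ_[p]) ^ n ∈ nonunits ℤ_[p] := fun h ↦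
    PadicInt.prime_p.not_isUnit ((isUnit_pow_iff (Nat.one_le_iff_ne_zero.1 hn)).1 h)
  rw [Kmn1_eq_map, ← mapMatrix_levi_diag]
  refine ⟨mul_singleton_mul_eq_iUnion _ (fun i ↦ ?_) ?_, injective_singleton_mul _ ?_⟩
  · obtain ⟨k, hk, k', hk', h⟩ := i.exists_mul_mul_eq_rep ((p : ℤ_[p]) ^ m) ((p : ℤ_[p]) ^ n)
    exact ⟨_, ⟨k, hk, rfl⟩, _, ⟨k', hk', rfl⟩, by
      simp only [← map_mul, h, HeckeIndex.mapMatrix_rep]⟩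
  · rintro _ ⟨k, hk, rfl⟩
    obtain ⟨i, g, hg, h⟩ := HeckeIndex.exists_mul_eq_rep_mul hpn N hk
    exact ⟨i, _, ⟨g, hg, rfl⟩, by
      simp only [← map_mul, h, ← HeckeIndex.mapMatrix_rep PadicInt.Coe.ringHom]⟩
  · rintro i j _ ⟨k, -, rfl⟩ h
    simp only [← HeckeIndex.mapMatrix_rep PadicInt.Coe.ringHom, ← map_mul] at h
    exact HeckeIndex.eq_of_rep_mul_eq (map_injective Subtype.val_injective h)

variable (p : ℕ)

/-- The indices of the cosets `A`, `B`, `C`: the middle blocks are `!![p ^ 2, w; 0, 1]`,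
`!![p, w; 0, p]` and `!![1, 0; 0, p ^ 2]` respectively. -/
def rep5Index :
    (Fin (p ^ 2) × Fin (p ^ 2) × Fin (p ^ 2)) ⊕
      (Fin p × Fin p × Fin (p ^ 2) × {w : ℕ // 1 ≤ w ∧ w < p}) ⊕
        (Fin (p ^ 2) × Fin (p ^ 2)) → HeckeIndex p 2
  | .inl (x, y, z) => ⟨2, 0, 0, x, y, z, rfl, by simp, x.2, y.2, z.2, fun _ ↦ .inr rfl⟩
  | .inr (.inl (x, y, z, w)) =>
    ⟨1, 1, x, y, z, w, rfl, by simp, by simp, z.2, by simpa using w.2.2,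
      fun h ↦ absurd h (Nat.not_dvd_of_pos_of_lt w.2.1 w.2.2)⟩
  | .inr (.inr (x, y)) =>
    ⟨0, 2, x, 0, y, 0, rfl, x.2, by simp, y.2, by simp, fun _ ↦ .inl rfl⟩

theorem rep5_eq_rep_comp_rep5Index [Fact p.Prime] :
    rep5 p = HeckeIndex.rep ℚ_[p] ∘ rep5Index p := by
  ext (⟨x, y, z⟩ | ⟨x, y, z, w⟩ | ⟨x, y⟩) r s <;>
    fin_cases r <;> fin_cases s <;>
    simp [rep5, rep5Index, HeckeIndex.rep_eq, mul_comm]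

theorem rep5Index_injective : Function.Injective (rep5Index p) := by
  rintro (⟨x, y, z⟩ | ⟨x, y, z, w⟩ | ⟨x, y⟩)
    (⟨x', y', z'⟩ | ⟨x', y', z', w'⟩ | ⟨x', y'⟩) h <;>
    simp only [rep5Index, HeckeIndex.mk.injEq] at h <;>
    grind

theorem rep5Index_surjective : Function.Surjective (rep5Index p) := by
  rintro ⟨a, b, x, y, z, w, hab, hx, hy, hz, hw, hprim⟩
  obtain ⟨rfl, rfl⟩ | ⟨rfl, rfl⟩ | ⟨rfl, rfl⟩ :
      a = 2 ∧ b = 0 ∨ a = 1 ∧ b = 1 ∨ a = 0 ∧ b = 2 := by lia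
  · obtain rfl : x = 0 := by simpa using hx
    exact ⟨.inl (⟨y, hy⟩, ⟨z, hz⟩, ⟨w, hw⟩), rfl⟩
  · rw [pow_one] at hx hy hw
    have hw0 : 1 ≤ w := Nat.pos_of_ne_zero fun h ↦ by simp [h] at hprim
    exact ⟨.inr (.inl (⟨x, hx⟩, ⟨y, hy⟩, ⟨z, hz⟩, ⟨w, hw0, hw⟩)), rfl⟩
  · obtain rfl : y = 0 := by simpa using hy
    obtain rfl : w = 0 := by simpa using hw
    exact ⟨.inr (.inr (⟨x, hx⟩, ⟨z, hz⟩)), rfl⟩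

end DoubleCosets

/-- Double coset decomposition of `K^{(1)}_{m,n} · diag(ℓ²,ℓ²,1,1) · K^{(1)}_{m,n}` into
pairwise distinct left cosets. -/
theorem stmt5 (p : ℕ) [Fact p.Prime] (m n : ℕ) (hn : 1 ≤ n) :
    (Kmn1 p m n *
        {Matrix.diagonal ![(p : ℚ_[p]) ^ 2, (p : ℚ_[p]) ^ 2, 1, 1]} * Kmn1 p m n =
      ⋃ i : (Fin (p ^ 2) × Fin (p ^ 2) × Fin (p ^ 2)) ⊕
          (Fin p × Fin p × Fin (p ^ 2) × {w : ℕ // 1 ≤ w ∧ w < p}) ⊕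
            (Fin (p ^ 2) × Fin (p ^ 2)),
        ({rep5 p i} : Set (Matrix (Fin 4) (Fin 4) ℚ_[p])) * Kmn1 p m n) ∧
    Function.Injective
      (fun i : (Fin (p ^ 2) × Fin (p ^ 2) × Fin (p ^ 2)) ⊕
          (Fin p × Fin p × Fin (p ^ 2) × {w : ℕ // 1 ≤ w ∧ w < p}) ⊕
            (Fin (p ^ 2) × Fin (p ^ 2)) =>
        ({rep5 p i} : Set (Matrix (Fin 4) (Fin 4) ℚ_[p])) * Kmn1 p m n) := by
  obtain ⟨hunion, hinj⟩ := stmt5_general p m n 2 hn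
  rw [rep5_eq_rep_comp_rep5Index, hunion]
  exact ⟨((rep5Index_surjective p).iUnion_comp _).symm, hinj.comp (rep5Index_injective p)⟩
end
end

section
/- Let ℓ be a prime and m ≥ 0, n ≥ 1 integers. In GSp₄(ℚ_ℓ) one has the double coset decomposition K^{(1)}_{m,n} · diag(ℓ³, ℓ², ℓ, 1) · K^{(1)}_{m,n} = ⋃ A(w,x,y,z) · K^{(1)}_{m,n} ∪ ⋃ B(x,y,z) · K^{(1)}_{m,n}, where A(w,x,y,z) has rows (ℓ³, ℓ²x, ℓwx+ℓy, z), (0, ℓ², ℓw, y), (0, 0, ℓ, −x), (0, 0, 0, 1) with the union over 0 ≤ w, x < ℓ, 0 ≤ y < ℓ², 0 ≤ z < ℓ³, and B(x,y,z) has rows (ℓ³, ℓy, ℓ²x, z), (0, ℓ, 0, x), (0, 0, ℓ², −y), (0, 0, 0, 1) with the union over 0 ≤ x < ℓ, 0 ≤ y < ℓ², 0 ≤ z < ℓ³; all the listed left cosets are pairwise distinct. -/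
open Pointwise

noncomputable section

/-- The coset representatives `A(w,x,y,z)` (for `0 ≤ w,x < ℓ`, `0 ≤ y < ℓ²`,
`0 ≤ z < ℓ³`) and `B(x,y,z)` (for `0 ≤ x < ℓ`, `0 ≤ y < ℓ²`, `0 ≤ z < ℓ³`). -/
def rep6 (p : ℕ) [Fact p.Prime] :
    (Fin p × Fin p × Fin (p ^ 2) × Fin (p ^ 3)) ⊕
      (Fin p × Fin (p ^ 2) × Fin (p ^ 3)) → Matrix (Fin 4) (Fin 4) ℚ_[p] :=
  Sum.elim
    (fun i => !![(p : ℚ_[p]) ^ 3, (p : ℚ_[p]) ^ 2 * ((i.2.1 : ℕ) : ℚ_[p]),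
                   (p : ℚ_[p]) * ((i.1 : ℕ) : ℚ_[p]) * ((i.2.1 : ℕ) : ℚ_[p]) +
                     (p : ℚ_[p]) * ((i.2.2.1 : ℕ) : ℚ_[p]), ((i.2.2.2 : ℕ) : ℚ_[p]);
                 0, (p : ℚ_[p]) ^ 2, (p : ℚ_[p]) * ((i.1 : ℕ) : ℚ_[p]),
                   ((i.2.2.1 : ℕ) : ℚ_[p]);
                 0, 0, (p : ℚ_[p]), -((i.2.1 : ℕ) : ℚ_[p]);
                 0, 0, 0, 1])
    (fun i => !![(p : ℚ_[p]) ^ 3, (p : ℚ_[p]) * ((i.2.1 : ℕ) : ℚ_[p]),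
                   (p : ℚ_[p]) ^ 2 * ((i.1 : ℕ) : ℚ_[p]), ((i.2.2 : ℕ) : ℚ_[p]);
                 0, (p : ℚ_[p]), 0, ((i.1 : ℕ) : ℚ_[p]);
                 0, 0, (p : ℚ_[p]) ^ 2, -((i.2.1 : ℕ) : ℚ_[p]);
                 0, 0, 0, 1])

/-!
All the matrices involved have entries in `ℤ_ℓ`, and each representative is an upper unitriangular
`U ∈ K` times `T₁ = diag(ℓ³, ℓ², ℓ, 1)` or `T₂ = diag(ℓ³, ℓ, ℓ², 1)`, which a Weyl element of `K`
interchanges.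

Let `k ∈ K`. Its entry `(4,4)` is a unit, so one can choose `U` to make the last column of
`h = U⁻¹ k` divisible, entry by entry, by the diagonal of `T₁` or `T₂`. If the entry `(3,3)` of `k`
is a unit, the remaining parameter `w` of `U` can moreover be chosen such that `ℓ` divides the entry
`(2,3)` of `h`, and one takes `T = T₁`; otherwise one takes `T = T₂`. Since the columns of `h` are
orthogonal for `J`, the rest of its top row is then divisible as well, so that `h T₁ ∈ T K` and
`k T₁ ∈ U T K`.

If two representatives define the same coset, then one divides the other on the left, hence a
diagonal matrix divides a unitriangular matrix times a diagonal one, row by row. This determines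
the type of the representative and the residues of its parameters.
-/

open Matrix

section CosetDecomposition

variable {M ι : Type*} [Monoid M]

lemma mul_singleton_mul_eq_iUnion_s6 (S : Submonoid M) {d : M} {r : ι → M}
    (hr : ∀ i, r i ∈ (S : Set M) * {d} * (S : Set M))
    (hd : ∀ k ∈ S, ∃ i, k * d ∈ {r i} * (S : Set M)) :
    (S : Set M) * {d} * (S : Set M) = ⋃ i, {r i} * (S : Set M) := by
  apply subset_antisymm
  · rintro _ ⟨_, ⟨k, hk, _, rfl, rfl⟩, k', hk', rfl⟩
    obtain ⟨i, _, rfl, l, hl, hkd⟩ := hd k hk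
    refine Set.mem_iUnion.2 ⟨i, _, rfl, l * k', S.mul_mem hl hk', ?_⟩
    simp only [← hkd, mul_assoc]
  · refine Set.iUnion_subset fun i => ?_
    calc {r i} * (S : Set M) ⊆ (S : Set M) * {d} * (S : Set M) * (S : Set M) :=
          Set.mul_subset_mul_right (Set.singleton_subset_iff.2 (hr i))
      _ = (S : Set M) * {d} * (S : Set M) := by rw [mul_assoc, Submonoid.coe_mul_self_eq]

lemma dvd_of_singleton_mul_eq (S : Submonoid M) {a b : M}
    (h : {a} * (S : Set M) = {b} * (S : Set M)) : a ∣ b := by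
  have hb : b ∈ {a} * (S : Set M) := h ▸ ⟨b, rfl, 1, S.one_mem, mul_one b⟩
  obtain ⟨_, rfl, k, -, rfl⟩ := hb
  exact dvd_mul_right _ k

end CosetDecomposition

section Diagonal

variable {R ι : Type*} [Fintype ι] [DecidableEq ι]

lemma diagonal_dvd_iff [Semiring R] {d : ι → R} {A : Matrix ι ι R} :
    diagonal d ∣ A ↔ ∀ i j, d i ∣ A i j := by
  constructor
  · rintro ⟨k, rfl⟩ i j
    simp only [diagonal_mul, dvd_mul_right]
  · intro h
    choose k hk using h
    refine ⟨of k, ?_⟩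
    ext i j
    simp only [diagonal_mul, of_apply, hk i j]

lemma mem_ideal_of_diagonal_mul_eq [CommRing R] [IsDomain R] {N : Ideal R} {d d' : ι → R}
    {h k : Matrix ι ι R} (hk : diagonal d' * k = h * diagonal d) {i j : ι} (hN : h i j ∈ N)
    (hd : d' i ∣ d j) (hd' : d' i ≠ 0) : k i j ∈ N := by
  obtain ⟨e, he⟩ := hd
  have hentry : d' i * k i j = h i j * d j := by
    simpa only [diagonal_mul, mul_diagonal] using congrFun (congrFun hk i) j
  have hkij : k i j = h i j * e := mul_left_cancel₀ hd' (by rw [hentry, he]; ring)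
  exact hkij ▸ N.mul_mem_right e hN

end Diagonal

section Similitude

variable {R S : Type*} [CommRing R] [CommRing S] {g h : Matrix (Fin 4) (Fin 4) R} {μ ν : R}

variable (R) in
/-- The skew-symmetric matrix `J` defining `GSp₄`, over an arbitrary commutative ring. -/
def symplecticMatrix : Matrix (Fin 4) (Fin 4) R :=
  !![0, 0, 0, 1; 0, 0, 1, 0; 0, -1, 0, 0; -1, 0, 0, 0]

/-- `g` is a symplectic similitude with multiplier `μ`. Invertibility of `g` is not part of the
notion; it is automatic when `μ` is a unit. -/
def IsSymplecticSimilitude (g : Matrix (Fin 4) (Fin 4) R) (μ : R) : Prop :=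
  gᵀ * symplecticMatrix R * g = μ • symplecticMatrix R

lemma mapMatrix_symplecticMatrix (f : R →+* S) :
    f.mapMatrix (symplecticMatrix R) = symplecticMatrix S := by
  ext i j
  fin_cases i <;> fin_cases j <;> simp [symplecticMatrix]

lemma det_symplecticMatrix : (symplecticMatrix R).det = 1 := by
  simp [symplecticMatrix, det_succ_row_zero, Fin.sum_univ_succ, Fin.succAbove, pow_succ]

lemma isSymplecticSimilitude_mapMatrix_iff {f : R →+* S} (hf : Function.Injective f) :
    IsSymplecticSimilitude (f.mapMatrix g) (f μ) ↔ IsSymplecticSimilitude g μ := by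
  have hsmul : f μ • f.mapMatrix (symplecticMatrix R) = f.mapMatrix (μ • symplecticMatrix R) := by
    ext i j
    simp
  have htranspose : (f.mapMatrix g)ᵀ = f.mapMatrix gᵀ := rfl
  rw [IsSymplecticSimilitude, ← mapMatrix_symplecticMatrix f, hsmul, htranspose, ← map_mul,
    ← map_mul, (show Function.Injective f.mapMatrix from map_injective hf).eq_iff,
    IsSymplecticSimilitude]

namespace IsSymplecticSimilitude

lemma one : IsSymplecticSimilitude (1 : Matrix (Fin 4) (Fin 4) R) 1 := by
  simp [IsSymplecticSimilitude]

lemma transpose_mul_mul_mul (hg : IsSymplecticSimilitude g μ) :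
    (g * h)ᵀ * symplecticMatrix R * (g * h) = μ • (hᵀ * symplecticMatrix R * h) :=
  calc (g * h)ᵀ * symplecticMatrix R * (g * h)
      = hᵀ * (gᵀ * symplecticMatrix R * g) * h := by simp only [transpose_mul, Matrix.mul_assoc]
    _ = μ • (hᵀ * symplecticMatrix R * h) := by rw [hg, Matrix.mul_smul, Matrix.smul_mul]

lemma mul (hg : IsSymplecticSimilitude g μ) (hh : IsSymplecticSimilitude h ν) :
    IsSymplecticSimilitude (g * h) (μ * ν) := by
  rw [IsSymplecticSimilitude, hg.transpose_mul_mul_mul, hh, smul_smul]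

lemma of_mul_left [IsDomain R] (hg : IsSymplecticSimilitude g μ) (hμ : μ ≠ 0)
    (hgh : IsSymplecticSimilitude (g * h) (μ * ν)) : IsSymplecticSimilitude h ν := by
  rw [IsSymplecticSimilitude, hg.transpose_mul_mul_mul, ← smul_smul] at hgh
  exact smul_right_injective _ hμ hgh

lemma isUnit_det (hg : IsSymplecticSimilitude g μ) (hμ : IsUnit μ) : IsUnit g.det := by
  have hdet : g.det * g.det = μ ^ 4 := by
    simpa [det_symplecticMatrix] using congrArg det hg
  exact isUnit_of_mul_isUnit_left (hdet ▸ hμ.pow 4)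

lemma col_pairing (hg : IsSymplecticSimilitude g μ) (i j : Fin 4) :
    g 0 i * g 3 j + g 1 i * g 2 j - g 2 i * g 1 j - g 3 i * g 0 j =
      μ * symplecticMatrix R i j := by
  have hij := congrFun (congrFun hg i) j
  simp only [Matrix.mul_apply, Fin.sum_univ_four, transpose_apply, Matrix.smul_apply, smul_eq_mul,
    symplecticMatrix, of_apply, cons_val] at hij ⊢
  linear_combination hij

-- Orthogonality of columns `j` and `3` expresses `g 0 j * g 3 3` through the other entries.
lemma dvd_top_entry (hg : IsSymplecticSimilitude g μ) (hu : IsUnit (g 3 3)) {j : Fin 4}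
    (hj : symplecticMatrix R j 3 = 0) {a b c : R} (h1j : a ∣ g 1 j * c) (h2j : b ∣ g 2 j * c)
    (h03 : a * b ∣ g 0 3) (h13 : a ∣ g 1 3) (h23 : b ∣ g 2 3) : a * b ∣ g 0 j * c := by
  have hpair := hg.col_pairing j 3
  rw [hj, mul_zero] at hpair
  have htop : g 0 j * c * g 3 3 =
      g 1 3 * (g 2 j * c) - g 1 j * c * g 2 3 + g 3 j * c * g 0 3 := by
    linear_combination c * hpair
  rw [← hu.dvd_mul_right, htop]
  exact dvd_add (dvd_sub (mul_dvd_mul h13 h2j) (mul_dvd_mul h1j h23)) (h03.mul_left _)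

end IsSymplecticSimilitude

end Similitude

section Klingen

variable {R : Type*} [CommRing R] {I N : Ideal R} {g : Matrix (Fin 4) (Fin 4) R}

/-- The symplectic similitudes over `R` whose multiplier is a unit congruent to `1` modulo `I` and
which lie in the Klingen parabolic, with diagonal blocks of sizes `1, 2, 1`, modulo `N`. For
`R = ℤ_[p]`, `I = (p ^ m)` and `N = (p ^ n)` this is `Kmn1 p m n`. -/
def klingen (I N : Ideal R) : Submonoid (Matrix (Fin 4) (Fin 4) R) where
  carrier := {g | (∃ μ : Rˣ, (μ : R) - 1 ∈ I ∧ IsSymplecticSimilitude g (μ : R)) ∧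
    ((Ideal.Quotient.mk N).mapMatrix g).BlockTriangular ![0, 1, 1, 2]}
  one_mem' := by
    refine ⟨⟨1, by simp, .one⟩, ?_⟩
    rw [map_one]
    exact blockTriangular_one
  mul_mem' := by
    rintro g h ⟨⟨μ, hμ, hg⟩, hgN⟩ ⟨⟨ν, hν, hh⟩, hhN⟩
    refine ⟨⟨μ * ν, ?_, hg.mul hh⟩, by rw [map_mul]; exact hgN.mul hhN⟩
    have hsplit : ((μ * ν : Rˣ) : R) - 1 = μ * ((ν : R) - 1) + ((μ : R) - 1) := by
      push_cast
      ring
    exact hsplit ▸ I.add_mem (I.mul_mem_left _ hν) hμ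

lemma blockTriangular_quotient_iff :
    ((Ideal.Quotient.mk N).mapMatrix g).BlockTriangular ![0, 1, 1, 2] ↔
      g 1 0 ∈ N ∧ g 2 0 ∈ N ∧ g 3 0 ∈ N ∧ g 3 1 ∈ N ∧ g 3 2 ∈ N := by
  simp [BlockTriangular, Fin.forall_fin_succ, Ideal.Quotient.eq_zero_iff_mem]

lemma mem_klingen_iff :
    g ∈ klingen I N ↔ (∃ μ : Rˣ, (μ : R) - 1 ∈ I ∧ IsSymplecticSimilitude g (μ : R)) ∧
      g 1 0 ∈ N ∧ g 2 0 ∈ N ∧ g 3 0 ∈ N ∧ g 3 1 ∈ N ∧ g 3 2 ∈ N :=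
  and_congr_right fun _ => blockTriangular_quotient_iff

lemma isUnit_apply_three_three_of_mem_klingen [IsLocalRing R]
    (hN : N ≤ IsLocalRing.maximalIdeal R) (hg : g ∈ klingen I N) : IsUnit (g 3 3) := by
  obtain ⟨⟨μ, -, hμ⟩, h10, h20, h30, -, -⟩ := mem_klingen_iff.1 hg
  have hpair := hμ.col_pairing 0 3
  by_contra hunit
  have h33 : g 3 3 ∈ IsLocalRing.maximalIdeal R := (IsLocalRing.mem_maximalIdeal _).2 hunit
  refine (IsLocalRing.mem_maximalIdeal (μ : R)).1 ?_ μ.isUnit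
  have hμmem : μ * symplecticMatrix R 0 3 ∈ IsLocalRing.maximalIdeal R := by
    rw [← hpair]
    exact sub_mem (sub_mem (add_mem (Ideal.mul_mem_left _ _ h33)
      (Ideal.mul_mem_right _ _ (hN h10))) (Ideal.mul_mem_right _ _ (hN h20)))
      (Ideal.mul_mem_right _ _ (hN h30))
  simpa only [symplecticMatrix, of_apply, cons_val, mul_one] using hμmem

end Klingen

section Unipotent

variable {R : Type*} [CommRing R] {I N : Ideal R} {w x y z w' x' y' z' : R}

/-- The upper unitriangular symplectic matrix with parameters `w, x, y, z`, so that
`A(w,x,y,z) = unipotent w x y z * diag(ℓ³,ℓ²,ℓ,1)` and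
`B(x,y,z) = unipotent 0 y x z * diag(ℓ³,ℓ,ℓ²,1)`. -/
def unipotent (w x y z : R) : Matrix (Fin 4) (Fin 4) R :=
  !![1, x, w * x + y, z; 0, 1, w, y; 0, 0, 1, -x; 0, 0, 0, 1]

lemma unipotent_zero : unipotent (0 : R) 0 0 0 = 1 := by
  ext i j
  fin_cases i <;> fin_cases j <;> simp [unipotent]

lemma unipotent_mul_unipotent :
    unipotent w x y z * unipotent w' x' y' z' =
      unipotent (w + w') (x + x') (y + y' - w * x') (z + z' + x * y' - (w * x + y) * x') := by
  ext i j
  fin_cases i <;> fin_cases j <;>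
    simp only [unipotent, Matrix.mul_apply, Fin.sum_univ_four, of_apply, Fin.zero_eta, Fin.mk_one,
      Fin.reduceFinMk, cons_val] <;> ring

lemma unipotent_mul_inv :
    unipotent w x y z * unipotent (-w) (-x) (-(y + w * x)) (-z) = 1 := by
  rw [unipotent_mul_unipotent, ← unipotent_zero]
  congr 1 <;> ring

lemma isSymplecticSimilitude_unipotent : IsSymplecticSimilitude (unipotent w x y z) 1 := by
  ext i j
  fin_cases i <;> fin_cases j <;>
    simp only [unipotent, symplecticMatrix, one_smul, Matrix.mul_apply, Fin.sum_univ_four,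
      transpose_apply, of_apply, Fin.zero_eta, Fin.mk_one, Fin.reduceFinMk, cons_val] <;> ring

lemma unipotent_mem_klingen : unipotent w x y z ∈ klingen I N :=
  mem_klingen_iff.2 ⟨⟨1, by simp, isSymplecticSimilitude_unipotent⟩, by simp [unipotent]⟩

end Unipotent

section Torus

variable {R : Type*} [CommRing R] {I N : Ideal R} {h k : Matrix (Fin 4) (Fin 4) R}
  {a b a' b' μ : R}

/-- The diagonal symplectic similitude `diag(ab, a, b, 1)`, of multiplier `ab`. -/
def torus (a b : R) : Matrix (Fin 4) (Fin 4) R :=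
  diagonal ![a * b, a, b, 1]

lemma isSymplecticSimilitude_torus : IsSymplecticSimilitude (torus a b) (a * b) := by
  ext i j
  fin_cases i <;> fin_cases j <;>
    simp [torus, symplecticMatrix, mul_comm]

lemma unipotent_mul_torus {w x y z : R} : unipotent w x y z * torus a b =
    !![a * b, x * a, (w * x + y) * b, z; 0, a, w * b, y; 0, 0, b, -x; 0, 0, 0, 1] := by
  ext i j
  rw [torus, mul_diagonal]
  fin_cases i <;> fin_cases j <;> simp [unipotent]

lemma dvd_of_torus_dvd_unipotent_mul_torus {w x y z : R}
    (h : torus a b ∣ unipotent w x y z * torus a' b') :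
    a ∣ a' ∧ b ∣ b' ∧ a ∣ w * b' ∧ b ∣ x ∧ a ∣ y ∧ a * b ∣ z := by
  rw [unipotent_mul_torus] at h
  have hentry := diagonal_dvd_iff.1 h
  exact ⟨by simpa using hentry 1 1, by simpa using hentry 2 2, by simpa using hentry 1 2,
    by simpa using hentry 2 3, by simpa using hentry 1 3, by simpa using hentry 0 3⟩

lemma torus_dvd_of_unipotent_mul_torus_dvd {w x y z w' x' y' z' : R}
    (h : unipotent w x y z * torus a b ∣ unipotent w' x' y' z' * torus a' b') :
    torus a b ∣ unipotent (w' - w) (x' - x) (y' - y + w * (x' - x))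
      (z' - z + y * x' - x * y') * torus a' b' := by
  have hquot : unipotent w' x' y' z' = unipotent w x y z * unipotent (w' - w) (x' - x)
      (y' - y + w * (x' - x)) (z' - z + y * x' - x * y') := by
    rw [unipotent_mul_unipotent]
    congr 1 <;> ring
  have hunit : IsUnit (unipotent w x y z) := .of_mul_eq_one _ unipotent_mul_inv
  obtain ⟨k, hk⟩ := h
  refine ⟨k, hunit.mul_left_cancel ?_⟩
  rw [← Matrix.mul_assoc, ← Matrix.mul_assoc, ← hquot, hk]

lemma torus_dvd_mul_torus (hh : IsSymplecticSimilitude h μ) (hu : IsUnit (h 3 3))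
    (hab : a * b = a' * b') (h11 : a' ∣ h 1 1 * a) (h12 : a' ∣ h 1 2 * b)
    (h21 : b' ∣ h 2 1 * a) (h22 : b' ∣ h 2 2 * b)
    (h03 : a' * b' ∣ h 0 3) (h13 : a' ∣ h 1 3) (h23 : b' ∣ h 2 3) :
    torus a' b' ∣ h * torus a b := by
  have h01 : a' * b' ∣ h 0 1 * a :=
    hh.dvd_top_entry hu (by simp [symplecticMatrix]) h11 h21 h03 h13 h23
  have h02 : a' * b' ∣ h 0 2 * b :=
    hh.dvd_top_entry hu (by simp [symplecticMatrix]) h12 h22 h03 h13 h23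
  refine diagonal_dvd_iff.2 fun i j => ?_
  rw [torus, mul_diagonal]
  fin_cases i <;> fin_cases j <;> simp [*, dvd_mul_of_dvd_right]

lemma mem_klingen_of_torus_mul_eq [IsDomain R] (hk : torus a' b' * k = h * torus a b)
    (hh : h ∈ klingen I N) (hab : a * b = a' * b') (hne : a * b ≠ 0) : k ∈ klingen I N := by
  obtain ⟨⟨μ, hμI, hμ⟩, h10, h20, h30, h31, h32⟩ := mem_klingen_iff.1 hh
  have ha' : a' ≠ 0 := left_ne_zero_of_mul (hab ▸ hne)
  have hb' : b' ≠ 0 := right_ne_zero_of_mul (hab ▸ hne)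
  refine mem_klingen_iff.2 ⟨⟨μ, hμI, ?_⟩, mem_ideal_of_diagonal_mul_eq hk h10 ?_ ?_,
    mem_ideal_of_diagonal_mul_eq hk h20 ?_ ?_, mem_ideal_of_diagonal_mul_eq hk h30 ?_ ?_,
    mem_ideal_of_diagonal_mul_eq hk h31 ?_ ?_, mem_ideal_of_diagonal_mul_eq hk h32 ?_ ?_⟩
  · refine isSymplecticSimilitude_torus.of_mul_left (hab ▸ hne) (g := torus a' b') ?_
    rw [hk, mul_comm, ← hab]
    exact hμ.mul isSymplecticSimilitude_torus
  all_goals simp [*]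

variable (R) in
/-- The Weyl group element interchanging the two middle entries of `torus a b`. -/
def weyl : Matrix (Fin 4) (Fin 4) R :=
  !![1, 0, 0, 0; 0, 0, 1, 0; 0, -1, 0, 0; 0, 0, 0, 1]

lemma weyl_pow_four : weyl R ^ 4 = 1 := by
  ext i j
  fin_cases i <;> fin_cases j <;>
    simp [weyl, pow_succ, Matrix.mul_apply, Fin.sum_univ_four]

lemma weyl_mem_klingen : weyl R ∈ klingen I N := by
  refine mem_klingen_iff.2 ⟨⟨1, by simp, ?_⟩, by simp [weyl]⟩
  ext i j
  fin_cases i <;> fin_cases j <;>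
    simp [weyl, symplecticMatrix, Matrix.mul_apply, Fin.sum_univ_four]

lemma weyl_mul_torus : weyl R * torus a b = torus b a * weyl R := by
  ext i j
  fin_cases i <;> fin_cases j <;> simp [weyl, torus, mul_comm]

lemma torus_swap_eq : torus b a = weyl R * torus a b * weyl R ^ 3 := by
  rw [weyl_mul_torus, Matrix.mul_assoc, ← pow_succ', weyl_pow_four, Matrix.mul_one]

end Torus

section Padic

variable {p : ℕ} [Fact p.Prime] {I N : Ideal ℤ_[p]} {k : Matrix (Fin 4) (Fin 4) ℤ_[p]}

lemma exists_lt_pow_dvd_sub_mul (r : ℕ) {u : ℤ_[p]} (hu : IsUnit u) (c : ℤ_[p]) :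
    ∃ t < p ^ r, (p : ℤ_[p]) ^ r ∣ c - t * u := by
  obtain ⟨u, rfl⟩ := hu
  refine ⟨_, PadicInt.appr_lt (c * (↑u⁻¹ : ℤ_[p])) r, ?_⟩
  have happr := Ideal.mem_span_singleton.1 (PadicInt.appr_spec r (c * (↑u⁻¹ : ℤ_[p])))
  convert happr.mul_right (u : ℤ_[p]) using 1
  rw [sub_mul, mul_assoc, Units.inv_mul, mul_one]

lemma eq_of_pow_dvd_natCast_sub {r s t : ℕ} (hs : s < p ^ r) (ht : t < p ^ r)
    (h : (p : ℤ_[p]) ^ r ∣ t - s) : s = t := by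
  have hint : ((p ^ r : ℕ) : ℤ) ∣ t - s := by
    exact_mod_cast (PadicInt.pow_p_dvd_int_iff r (t - s)).1 (by exact_mod_cast h)
  exact Nat.ModEq.eq_of_lt_of_lt (Nat.modEq_iff_dvd.2 hint) hs ht

lemma dvd_of_mem_of_le_maximalIdeal (hN : N ≤ IsLocalRing.maximalIdeal ℤ_[p]) {c : ℤ_[p]}
    (hc : c ∈ N) : (p : ℤ_[p]) ∣ c :=
  Ideal.mem_span_singleton.1 (PadicInt.maximalIdeal_eq_span_p (p := p) ▸ hN hc)

lemma exists_eq_unipotent_mul (hk : k ∈ klingen I N) (hu : IsUnit (k 3 3)) (w : ℤ_[p])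
    (r s : ℕ) :
    ∃ x < p ^ s, ∃ y < p ^ r, ∃ z < p ^ (r + s), ∃ h ∈ klingen I N, k = unipotent w x y z * h ∧
      (p : ℤ_[p]) ^ r * p ^ s ∣ h 0 3 ∧ (p : ℤ_[p]) ^ r ∣ h 1 3 ∧ (p : ℤ_[p]) ^ s ∣ h 2 3 := by
  obtain ⟨x, hx, hx'⟩ := exists_lt_pow_dvd_sub_mul s hu (-k 2 3)
  obtain ⟨y, hy, hy'⟩ := exists_lt_pow_dvd_sub_mul r hu (k 1 3 - w * k 2 3 - w * x * k 3 3)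
  obtain ⟨z, hz, hz'⟩ := exists_lt_pow_dvd_sub_mul (r + s) hu (k 0 3 - x * k 1 3 - y * k 2 3)
  refine ⟨x, hx, y, hy, z, hz, unipotent (-w) (-x) (-(y + w * x)) (-z) * k,
    mul_mem unipotent_mem_klingen hk, ?_, ?_, ?_, ?_⟩
  · rw [← Matrix.mul_assoc, unipotent_mul_inv, Matrix.one_mul]
  · rw [← pow_add]
    convert hz' using 1
    simp only [unipotent, Matrix.mul_apply, Fin.sum_univ_four, of_apply, cons_val]
    ring
  · convert hy' using 1
    simp only [unipotent, Matrix.mul_apply, Fin.sum_univ_four, of_apply, cons_val]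
    ring
  · rw [← dvd_neg]
    convert hx' using 1
    simp only [unipotent, Matrix.mul_apply, Fin.sum_univ_four, of_apply, cons_val]
    ring

lemma exists_mul_torus_eq_of_isUnit (hN : N ≤ IsLocalRing.maximalIdeal ℤ_[p])
    (hk : k ∈ klingen I N) (hu : IsUnit (k 2 2)) :
    ∃ w < p, ∃ x < p, ∃ y < p ^ 2, ∃ z < p ^ 3, ∃ l ∈ klingen I N,
      k * torus ((p : ℤ_[p]) ^ 2) p =
        unipotent (w : ℤ_[p]) x y z * torus ((p : ℤ_[p]) ^ 2) p * l := by
  obtain ⟨w, hw, hw'⟩ := exists_lt_pow_dvd_sub_mul 1 hu (k 1 2)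
  obtain ⟨x, hx, y, hy, z, hz, h, hh, rfl, h03, h13, h23⟩ :=
    exists_eq_unipotent_mul hk (isUnit_apply_three_three_of_mem_klingen hN hk) w 2 1
  have h32 : (p : ℤ_[p]) ∣ h 3 2 :=
    dvd_of_mem_of_le_maximalIdeal hN (mem_klingen_iff.1 hh).2.2.2.2.2
  have h12 : (p : ℤ_[p]) ∣ h 1 2 := by
    have hentry : h 1 2 = (unipotent (w : ℤ_[p]) x y z * h) 1 2 -
        w * (unipotent (w : ℤ_[p]) x y z * h) 2 2 - (y + w * x) * h 3 2 := by
      simp only [unipotent, Matrix.mul_apply, Fin.sum_univ_four, of_apply, cons_val]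
      ring
    rw [pow_one] at hw'
    exact hentry ▸ dvd_sub hw' (h32.mul_left _)
  rw [pow_one] at hw hx h03 h23
  obtain ⟨⟨_, -, hμ⟩, -⟩ := mem_klingen_iff.1 hh
  obtain ⟨l, hl⟩ := torus_dvd_mul_torus hμ (isUnit_apply_three_three_of_mem_klingen hN hh) rfl
    (dvd_mul_left _ _) (sq (p : ℤ_[p]) ▸ mul_dvd_mul_right h12 _)
    ((dvd_pow_self _ two_ne_zero).mul_left _) (dvd_mul_left _ _) h03 h13 h23
  refine ⟨w, hw, x, hx, y, hy, z, hz, l, mem_klingen_of_torus_mul_eq hl.symm hh rfl ?_, ?_⟩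
  · simp [PadicInt.prime_p.ne_zero]
  · rw [Matrix.mul_assoc, hl, Matrix.mul_assoc]

lemma exists_mul_torus_eq_of_dvd (hN : N ≤ IsLocalRing.maximalIdeal ℤ_[p])
    (hk : k ∈ klingen I N) (hdvd : (p : ℤ_[p]) ∣ k 2 2) :
    ∃ x < p, ∃ y < p ^ 2, ∃ z < p ^ 3, ∃ l ∈ klingen I N,
      k * torus ((p : ℤ_[p]) ^ 2) p =
        unipotent (0 : ℤ_[p]) y x z * torus (p : ℤ_[p]) (p ^ 2) * l := by
  obtain ⟨y, hy, x, hx, z, hz, h, hh, rfl, h03, h13, h23⟩ :=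
    exists_eq_unipotent_mul hk (isUnit_apply_three_three_of_mem_klingen hN hk) 0 1 2
  have h32 : (p : ℤ_[p]) ∣ h 3 2 :=
    dvd_of_mem_of_le_maximalIdeal hN (mem_klingen_iff.1 hh).2.2.2.2.2
  have h22 : (p : ℤ_[p]) ∣ h 2 2 := by
    have hentry : h 2 2 = (unipotent (0 : ℤ_[p]) y x z * h) 2 2 + y * h 3 2 := by
      simp [unipotent, Matrix.mul_apply, Fin.sum_univ_four]
    exact hentry ▸ dvd_add hdvd (h32.mul_left _)
  rw [pow_one] at hx h03 h13
  obtain ⟨⟨_, -, hμ⟩, -⟩ := mem_klingen_iff.1 hh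
  obtain ⟨l, hl⟩ := torus_dvd_mul_torus hμ (isUnit_apply_three_three_of_mem_klingen hN hh)
    (mul_comm _ _) ((dvd_pow_self _ two_ne_zero).mul_left _) (dvd_mul_left _ _)
    (dvd_mul_left _ _) (sq (p : ℤ_[p]) ▸ mul_dvd_mul_right h22 _) h03 h13 h23
  refine ⟨x, hx, y, hy, z, hz, l, mem_klingen_of_torus_mul_eq hl.symm hh (mul_comm _ _) ?_, ?_⟩
  · simp [PadicInt.prime_p.ne_zero]
  · rw [Matrix.mul_assoc, hl, Matrix.mul_assoc]

variable (p) in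
/-- The coset representatives `rep6 p`, over `ℤ_[p]` and factored as a unipotent matrix times a
diagonal one. -/
def cosetRep : (Fin p × Fin p × Fin (p ^ 2) × Fin (p ^ 3)) ⊕ (Fin p × Fin (p ^ 2) × Fin (p ^ 3)) →
    Matrix (Fin 4) (Fin 4) ℤ_[p] :=
  Sum.elim
    (fun (w, x, y, z) => unipotent ((w : ℕ) : ℤ_[p]) (x : ℕ) (y : ℕ) (z : ℕ) *
      torus ((p : ℤ_[p]) ^ 2) p)
    (fun (x, y, z) => unipotent (0 : ℤ_[p]) (y : ℕ) (x : ℕ) (z : ℕ) *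
      torus (p : ℤ_[p]) (p ^ 2))

lemma cosetRep_mem (i) :
    cosetRep p i ∈ (klingen I N : Set (Matrix (Fin 4) (Fin 4) ℤ_[p])) *
      {torus ((p : ℤ_[p]) ^ 2) p} * (klingen I N : Set (Matrix (Fin 4) (Fin 4) ℤ_[p])) := by
  rcases i with ⟨w, x, y, z⟩ | ⟨x, y, z⟩
  · exact ⟨_, ⟨_, unipotent_mem_klingen, _, rfl, rfl⟩, 1, one_mem _, mul_one _⟩
  · have hrep : unipotent (0 : ℤ_[p]) (y : ℕ) (x : ℕ) (z : ℕ) * weyl ℤ_[p] *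
        torus ((p : ℤ_[p]) ^ 2) p * weyl ℤ_[p] ^ 3 = cosetRep p (.inr (x, y, z)) := by
      simp only [cosetRep, Sum.elim_inr, torus_swap_eq (a := (p : ℤ_[p]) ^ 2), Matrix.mul_assoc]
    exact ⟨_, ⟨_, mul_mem unipotent_mem_klingen weyl_mem_klingen, _, rfl, rfl⟩, _,
      pow_mem weyl_mem_klingen 3, hrep⟩

lemma exists_mul_torus_mem (hN : N ≤ IsLocalRing.maximalIdeal ℤ_[p]) (hk : k ∈ klingen I N) :
    ∃ i, k * torus ((p : ℤ_[p]) ^ 2) p ∈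
      {cosetRep p i} * (klingen I N : Set (Matrix (Fin 4) (Fin 4) ℤ_[p])) := by
  by_cases hu : IsUnit (k 2 2)
  · obtain ⟨w, hw, x, hx, y, hy, z, hz, l, hl, hkl⟩ := exists_mul_torus_eq_of_isUnit hN hk hu
    exact ⟨.inl (⟨w, hw⟩, ⟨x, hx⟩, ⟨y, hy⟩, ⟨z, hz⟩), _, rfl, l, hl, hkl.symm⟩
  · rw [PadicInt.not_isUnit_iff, PadicInt.norm_lt_one_iff_dvd] at hu
    obtain ⟨x, hx, y, hy, z, hz, l, hl, hkl⟩ := exists_mul_torus_eq_of_dvd hN hk hu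
    exact ⟨.inr (⟨x, hx⟩, ⟨y, hy⟩, ⟨z, hz⟩), _, rfl, l, hl, hkl.symm⟩

lemma not_sq_dvd_self : ¬ (p : ℤ_[p]) ^ 2 ∣ p := by
  intro h
  have hpow : (p : ℤ_[p]) ^ 2 ∣ p ^ 1 := by rwa [pow_one]
  exact absurd ((pow_dvd_pow_iff PadicInt.prime_p.ne_zero PadicInt.prime_p.not_isUnit).1 hpow)
    (by decide)

lemma eq_of_dvd_natCast_sub {s t : ℕ} (hs : s < p) (ht : t < p) (h : (p : ℤ_[p]) ∣ t - s) :
    s = t :=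
  eq_of_pow_dvd_natCast_sub (r := 1) (by rwa [pow_one]) (by rwa [pow_one]) (by rwa [pow_one])

lemma eq_of_cosetRep_dvd {i j} (h : cosetRep p i ∣ cosetRep p j) : i = j := by
  rcases i with ⟨w, x, y, z⟩ | ⟨x, y, z⟩ <;> rcases j with ⟨w', x', y', z'⟩ | ⟨x', y', z'⟩ <;>
    obtain ⟨ha, hb, hw, hx, hy, hz⟩ :=
      dvd_of_torus_dvd_unipotent_mul_torus (torus_dvd_of_unipotent_mul_torus_dvd h)
  · obtain rfl : x = x' := Fin.ext (eq_of_dvd_natCast_sub x.2 x'.2 hx)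
    obtain rfl : w = w' := by
      rw [sq, mul_dvd_mul_iff_right PadicInt.prime_p.ne_zero] at hw
      exact Fin.ext (eq_of_dvd_natCast_sub w.2 w'.2 hw)
    obtain rfl : y = y' := Fin.ext (eq_of_pow_dvd_natCast_sub y.2 y'.2 (by simpa using hy))
    obtain rfl : z = z' := Fin.ext (eq_of_pow_dvd_natCast_sub z.2 z'.2 (by
      convert hz using 1 <;> ring))
    rfl
  · exact (not_sq_dvd_self ha).elim
  · exact (not_sq_dvd_self hb).elim
  · obtain rfl : x = x' := Fin.ext (eq_of_dvd_natCast_sub x.2 x'.2 (by simpa using hy))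
    obtain rfl : y = y' := Fin.ext (eq_of_pow_dvd_natCast_sub y.2 y'.2 hx)
    obtain rfl : z = z' := Fin.ext (eq_of_pow_dvd_natCast_sub z.2 z'.2 (by
      convert hz using 1 <;> ring))
    rfl

theorem klingen_mul_torus_mul_klingen (hN : N ≤ IsLocalRing.maximalIdeal ℤ_[p]) :
    (klingen I N : Set (Matrix (Fin 4) (Fin 4) ℤ_[p])) * {torus ((p : ℤ_[p]) ^ 2) p} *
        (klingen I N : Set (Matrix (Fin 4) (Fin 4) ℤ_[p])) =
      ⋃ i, {cosetRep p i} * (klingen I N : Set (Matrix (Fin 4) (Fin 4) ℤ_[p])) :=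
  mul_singleton_mul_eq_iUnion_s6 _ cosetRep_mem fun _ => exists_mul_torus_mem hN

theorem injective_cosetRep_mul_klingen :
    Function.Injective fun i =>
      {cosetRep p i} * (klingen I N : Set (Matrix (Fin 4) (Fin 4) ℤ_[p])) :=
  fun _ _ h => eq_of_cosetRep_dvd (dvd_of_singleton_mul_eq _ h)

end Padic

section BaseChange

variable {p : ℕ} [Fact p.Prime] {m n : ℕ}

variable (p) in
/-- The entrywise inclusion of `4 × 4` matrices over `ℤ_[p]` into those over `ℚ_[p]`. -/
def toPadicMatrix : Matrix (Fin 4) (Fin 4) ℤ_[p] →+* Matrix (Fin 4) (Fin 4) ℚ_[p] :=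
  PadicInt.Coe.ringHom.mapMatrix

variable (p) in
lemma toPadicMatrix_injective : Function.Injective (toPadicMatrix p) :=
  map_injective Subtype.val_injective

lemma toPadicMatrix_mem_Kmn1_iff {g : Matrix (Fin 4) (Fin 4) ℤ_[p]} :
    toPadicMatrix p g ∈ Kmn1 p m n ↔
      g ∈ klingen (Ideal.span {(p : ℤ_[p]) ^ m}) (Ideal.span {(p : ℤ_[p]) ^ n}) := by
  have hsim (μ : ℤ_[p]) : (toPadicMatrix p g)ᵀ * Jmat p * toPadicMatrix p g =
      (μ : ℚ_[p]) • Jmat p ↔ IsSymplecticSimilitude g μ :=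
    isSymplecticSimilitude_mapMatrix_iff (f := PadicInt.Coe.ringHom) Subtype.val_injective
  have hmul (μ : ℤ_[p]) : ‖(μ : ℚ_[p]) - 1‖ ≤ (p : ℝ) ^ (-(m : ℤ)) ↔
      μ - 1 ∈ Ideal.span {(p : ℤ_[p]) ^ m} := PadicInt.norm_le_pow_iff_mem_span_pow (μ - 1) m
  have hentry (i j : Fin 4) : ‖toPadicMatrix p g i j‖ ≤ (p : ℝ) ^ (-(n : ℤ)) ↔
      g i j ∈ Ideal.span {(p : ℤ_[p]) ^ n} := PadicInt.norm_le_pow_iff_mem_span_pow (g i j) n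
  have hdet : (toPadicMatrix p g).det = (g.det : ℤ_[p]) :=
    (RingHom.map_det PadicInt.Coe.ringHom g).symm
  simp only [Kmn1, Set.mem_ofPred_eq, mem_klingen_iff, hentry]
  constructor
  · rintro ⟨-, -, ⟨μ, hμ, hμm, hJ⟩, hlow⟩
    obtain ⟨μ, rfl⟩ : ∃ ν : ℤ_[p], (ν : ℚ_[p]) = μ := ⟨⟨μ, hμ.le⟩, rfl⟩
    exact ⟨⟨(PadicInt.isUnit_iff.2 hμ).unit, (hmul μ).1 hμm, (hsim μ).1 hJ⟩, hlow⟩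
  · rintro ⟨⟨μ, hμm, hJ⟩, hlow⟩
    refine ⟨fun i j => (g i j).norm_le_one, ?_, ⟨μ, PadicInt.norm_units μ, (hmul μ).2 hμm,
      (hsim μ).2 hJ⟩, hlow⟩
    rw [hdet]
    exact PadicInt.isUnit_iff.1 (hJ.isUnit_det μ.isUnit)

lemma Kmn1_eq_image_klingen :
    Kmn1 p m n = toPadicMatrix p ''
      (klingen (Ideal.span {(p : ℤ_[p]) ^ m}) (Ideal.span {(p : ℤ_[p]) ^ n}) : Set _) := by
  ext g
  constructor
  · intro hg
    let G : Matrix (Fin 4) (Fin 4) ℤ_[p] := of fun i j => ⟨g i j, hg.1 i j⟩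
    exact ⟨G, toPadicMatrix_mem_Kmn1_iff.1 hg, rfl⟩
  · rintro ⟨G, hG, rfl⟩
    exact toPadicMatrix_mem_Kmn1_iff.2 hG

lemma toPadicMatrix_torus :
    toPadicMatrix p (torus ((p : ℤ_[p]) ^ 2) p) =
      diagonal ![(p : ℚ_[p]) ^ 3, (p : ℚ_[p]) ^ 2, (p : ℚ_[p]), 1] := by
  ext i j
  fin_cases i <;> fin_cases j <;> simp [toPadicMatrix, torus, pow_succ]

lemma toPadicMatrix_cosetRep (i) : toPadicMatrix p (cosetRep p i) = rep6 p i := by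
  rcases i with ⟨w, x, y, z⟩ | ⟨x, y, z⟩ <;>
    simp only [cosetRep, rep6, Sum.elim_inl, Sum.elim_inr, unipotent_mul_torus] <;>
    ext i j <;> fin_cases i <;> fin_cases j <;> simp [toPadicMatrix] <;> ring

end BaseChange

/-- Double coset decomposition of `K^{(1)}_{m,n} · diag(ℓ³,ℓ²,ℓ,1) · K^{(1)}_{m,n}` into
pairwise distinct left cosets. -/
theorem stmt6 (p : ℕ) [Fact p.Prime] (m n : ℕ) (hn : 1 ≤ n) :
    (Kmn1 p m n *
        {Matrix.diagonal ![(p : ℚ_[p]) ^ 3, (p : ℚ_[p]) ^ 2, (p : ℚ_[p]), 1]} *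
          Kmn1 p m n =
      ⋃ i : (Fin p × Fin p × Fin (p ^ 2) × Fin (p ^ 3)) ⊕
          (Fin p × Fin (p ^ 2) × Fin (p ^ 3)),
        ({rep6 p i} : Set (Matrix (Fin 4) (Fin 4) ℚ_[p])) * Kmn1 p m n) ∧
    Function.Injective
      (fun i : (Fin p × Fin p × Fin (p ^ 2) × Fin (p ^ 3)) ⊕
          (Fin p × Fin (p ^ 2) × Fin (p ^ 3)) =>
        ({rep6 p i} : Set (Matrix (Fin 4) (Fin 4) ℚ_[p])) * Kmn1 p m n) := by
  have hN : Ideal.span {(p : ℤ_[p]) ^ n} ≤ IsLocalRing.maximalIdeal ℤ_[p] := by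
    rw [PadicInt.maximalIdeal_eq_span_p, Ideal.span_singleton_le_span_singleton]
    exact dvd_pow_self _ (Nat.one_le_iff_ne_zero.1 hn)
  have hcoset (i) : {rep6 p i} * Kmn1 p m n = toPadicMatrix p '' ({cosetRep p i} *
      (klingen (Ideal.span {(p : ℤ_[p]) ^ m}) (Ideal.span {(p : ℤ_[p]) ^ n}) : Set _)) := by
    rw [Set.image_mul, Set.image_singleton, toPadicMatrix_cosetRep, ← Kmn1_eq_image_klingen]
  simp only [hcoset]
  constructor
  · rw [← Set.image_iUnion, ← klingen_mul_torus_mul_klingen hN, Set.image_mul, Set.image_mul,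
      Set.image_singleton, toPadicMatrix_torus, ← Kmn1_eq_image_klingen]
  · exact (toPadicMatrix_injective p).image_injective.comp injective_cosetRep_mul_klingen
end
end
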